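/- Let n ≥ 6. Consider the position of n-Sim consisting of a drawn K_5 on 5 of the n vertices together with one additional green edge joining a vertex of the drawn K_5 to a vertex outside it, all other edges of K_n uncolored, with PII to move. Then PII has a winning strategy from this position. -/

import Mathlib

/-- The set of valid (non-loop) edges of the complete graph on `Fin n`. -/
def simEdges (n : ℕ) : Finset (Sym2 (Fin n)) :=
  Finset.univ.filter (fun e => ¬ e.IsDiag)

/-- An edge set `S` contains a triangle: three edges of `S` spanned by three
distinct vertices. -/
def HasTriangle {n : ℕ} (S : Finset (Sym2 (Fin n))) : Prop :=
  ∃ a b c : Fin n, a ≠ b ∧ a ≠ c ∧ b ≠ c ∧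
    s(a, b) ∈ S ∧ s(a, c) ∈ S ∧ s(b, c) ∈ S

/-- The uncolored edges, given the two players' edge sets. -/
def avail {n : ℕ} (A B : Finset (Sym2 (Fin n))) : Finset (Sym2 (Fin n)) :=
  simEdges n \ (A ∪ B)

/-- `MoverWins own opp` : in the game of n-Sim (players alternately claim an
uncolored edge of `K n`, and whoever first has a triangle in their own edges
loses), the player about to move, whose already-claimed edges are `own` while
the opponent's are `opp`, has a winning strategy.

The mover wins iff they can claim some uncolored edge `e` not creating a
triangle in their own color, so that afterwards the opponent still has to move
(there is an uncolored edge left; otherwise the game is a draw), and every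
reply `f` of the opponent either completes a triangle in the opponent's color
(so the opponent loses) or leads to a position where the original mover again
wins. -/
inductive MoverWins {n : ℕ} : Finset (Sym2 (Fin n)) → Finset (Sym2 (Fin n)) → Prop where
  | step (own opp : Finset (Sym2 (Fin n))) (e : Sym2 (Fin n))
      (he : e ∈ avail own opp)
      (hsafe : ¬ HasTriangle (insert e own))
      (hne : (avail opp (insert e own)).Nonempty)
      (hreplies : ∀ f ∈ avail opp (insert e own), ¬ HasTriangle (insert f opp) →
        MoverWins (insert e own) (insert f opp)) :
      MoverWins own opp

/-- `NonMoverWins own opp` : the player NOT about to move (the one whose edges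
are `opp`) has a winning strategy: there is at least one uncolored edge (the
mover must move), and every non-losing move of the mover leads to a position
won by the (new) mover, i.e. by the original non-mover. -/
def NonMoverWins {n : ℕ} (own opp : Finset (Sym2 (Fin n))) : Prop :=
  (avail own opp).Nonempty ∧
    ∀ e ∈ avail own opp, ¬ HasTriangle (insert e own) →
      MoverWins opp (insert e own)

/-- The green edges of a drawn `K₅` on the five distinct vertices
`v 0, …, v 4`: the pentagon `v i — v (i+1)`. -/
def greenK5 {n : ℕ} (v : Fin 5 → Fin n) : Finset (Sym2 (Fin n)) :=
  Finset.univ.image (fun i : Fin 5 => s(v i, v (i + 1)))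

/-- The red edges of a drawn `K₅` on the five distinct vertices
`v 0, …, v 4`: the complementary pentagram `v i — v (i+2)`. -/
def redK5 {n : ℕ} (v : Fin 5 → Fin n) : Finset (Sym2 (Fin n)) :=
  Finset.univ.image (fun i : Fin 5 => s(v i, v (i + 2)))

/-! Red steals a strategy. Green can never safely claim the edge `e` from `w` to the pentagon
neighbour `v (i + 1)` of `v i`, so if red, to move, wins after `e` has been added to the red edges
for free, then red already wins without `e`. Otherwise, since `R(3, 3) = 6` rules out draws, the
player not about to move wins the position with `e` added. But red can move to a copy of that
position in which the colors are exchanged: the pentagon and the pentagram are isomorphic, and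
once red claims `s(v (i + 2), w)`, the two neighbours of `w` are joined by a red edge, just as
`v i` and `v (i + 1)` are joined by a green one. So red, no longer about to move, wins. -/

section Triangles

variable {n : ℕ} {S T : Finset (Sym2 (Fin n))}

theorem HasTriangle.mono (hST : S ⊆ T) : HasTriangle S → HasTriangle T :=
  fun ⟨a, b, c, hab, hac, hbc, h₁, h₂, h₃⟩ => ⟨a, b, c, hab, hac, hbc, hST h₁, hST h₂, hST h₃⟩

theorem HasTriangle.of_insert_pendant {a w : Fin n} (h : HasTriangle (insert s(a, w) S))
    (hw : ∀ x, s(x, w) ∉ S) : HasTriangle S := by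
  obtain ⟨x, y, z, hxy, hxz, hyz, h₁, h₂, h₃⟩ := h
  have hw' : ∀ x, s(w, x) ∉ S := fun x => Sym2.eq_swap ▸ hw x
  refine ⟨x, y, z, hxy, hxz, hyz, ?_⟩
  simp only [Finset.mem_insert, Sym2.eq_iff] at h₁ h₂ h₃
  grind

theorem hasTriangle_or_hasTriangle_of_two_lt_card
    (hcover : ∀ a b : Fin n, a ≠ b → s(a, b) ∈ S ∨ s(a, b) ∈ T) {x : Fin n}
    (hx : 2 < ({y | y ≠ x ∧ s(x, y) ∈ S} : Finset (Fin n)).card) :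
    HasTriangle S ∨ HasTriangle T := by
  obtain ⟨a, ha, b, hb, c, hc, hab, hac, hbc⟩ := Finset.two_lt_card.1 hx
  simp only [Finset.mem_filter, Finset.mem_univ, true_and] at ha hb hc
  by_contra! ⟨hS, hT⟩
  have hab' : s(a, b) ∉ S := fun h => hS ⟨x, a, b, ha.1.symm, hb.1.symm, hab, ha.2, hb.2, h⟩
  have hac' : s(a, c) ∉ S := fun h => hS ⟨x, a, c, ha.1.symm, hc.1.symm, hac, ha.2, hc.2, h⟩
  have hbc' : s(b, c) ∉ S := fun h => hS ⟨x, b, c, hb.1.symm, hc.1.symm, hbc, hb.2, hc.2, h⟩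
  exact hT ⟨a, b, c, hab, hac, hbc, (hcover a b hab).resolve_left hab',
    (hcover a c hac).resolve_left hac', (hcover b c hbc).resolve_left hbc'⟩

theorem hasTriangle_or_hasTriangle_of_six_le (hn : 6 ≤ n)
    (hcover : ∀ a b : Fin n, a ≠ b → s(a, b) ∈ S ∨ s(a, b) ∈ T) :
    HasTriangle S ∨ HasTriangle T := by
  let x : Fin n := ⟨0, by omega⟩
  let N (U : Finset (Sym2 (Fin n))) : Finset (Fin n) := {y | y ≠ x ∧ s(x, y) ∈ U}
  have hN : Finset.univ.erase x ⊆ N S ∪ N T := fun y hy => by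
    have hyx : y ≠ x := Finset.ne_of_mem_erase hy
    simpa [N, hyx] using hcover x y hyx.symm
  have hcard : n - 1 ≤ (N S).card + (N T).card := calc
    n - 1 = (Finset.univ.erase x).card := by simp
    _ ≤ (N S ∪ N T).card := Finset.card_le_card hN
    _ ≤ (N S).card + (N T).card := Finset.card_union_le _ _
  obtain hS | hT : 2 < (N S).card ∨ 2 < (N T).card := by omega
  · exact hasTriangle_or_hasTriangle_of_two_lt_card hcover hS
  · exact (hasTriangle_or_hasTriangle_of_two_lt_card (fun a b hab => (hcover a b hab).symm) hT).symm

end Triangles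

section Strategy

variable {n : ℕ} {own opp : Finset (Sym2 (Fin n))} {e : Sym2 (Fin n)}

theorem mem_avail : e ∈ avail own opp ↔ ¬ e.IsDiag ∧ e ∉ own ∧ e ∉ opp := by
  simp [avail, simEdges]

theorem avail_insert_eq_erase (own opp : Finset (Sym2 (Fin n))) (e : Sym2 (Fin n)) :
    avail opp (insert e own) = (avail own opp).erase e := by
  ext g
  simp only [mem_avail, Finset.mem_insert, Finset.mem_erase]
  tauto

theorem avail_nonempty (hn : 6 ≤ n) (hown : ¬ HasTriangle own) (hopp : ¬ HasTriangle opp) :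
    (avail own opp).Nonempty := by
  by_contra hempty
  refine (hasTriangle_or_hasTriangle_of_six_le hn fun a b hab => ?_).elim hown hopp
  by_contra! hab'
  exact hempty ⟨s(a, b), mem_avail.2 ⟨by simpa using hab, hab'⟩⟩

theorem MoverWins.of_nonMoverWins (he : e ∈ avail own opp) (hsafe : ¬ HasTriangle (insert e own))
    (h : NonMoverWins opp (insert e own)) : MoverWins own opp :=
  .step own opp e he hsafe h.1 h.2

theorem moverWins_or_nonMoverWins {own opp : Finset (Sym2 (Fin n))} (hn : 6 ≤ n)
    (hown : ¬ HasTriangle own) (hopp : ¬ HasTriangle opp) :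
    MoverWins own opp ∨ NonMoverWins own opp := by
  by_cases hwin : MoverWins own opp
  · exact .inl hwin
  · refine .inr ⟨avail_nonempty hn hown hopp, fun e he hsafe => ?_⟩
    exact (moverWins_or_nonMoverWins hn hopp hsafe).resolve_right
      fun h => hwin (.of_nonMoverWins he hsafe h)
termination_by (avail own opp).card
decreasing_by
  rw [avail_insert_eq_erase]
  exact Finset.card_erase_lt_of_mem he

theorem MoverWins.of_insert (h : MoverWins (insert e own) opp)
    (he : HasTriangle (insert e opp)) : MoverWins own opp := by
  generalize hO : insert e own = O at h
  induction h generalizing own with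
  | step O opp f hf hsafe hne _ ih =>
    subst hO
    have hsub : insert f own ⊆ insert f (insert e own) :=
      Finset.insert_subset_insert _ (Finset.subset_insert _ _)
    have hf' : f ∈ avail own opp := by
      simp only [mem_avail, Finset.mem_insert, not_or] at hf ⊢
      exact ⟨hf.1, hf.2.1.2, hf.2.2⟩
    have hne' : (avail opp (insert f own)).Nonempty :=
      hne.mono (Finset.sdiff_subset_sdiff subset_rfl (Finset.union_subset_union_right hsub))
    refine .step own opp f hf' (mt (HasTriangle.mono hsub) hsafe) hne' fun g hg hgsafe => ?_
    have hge : g ≠ e := fun h => hgsafe (h ▸ he)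
    have hg' : g ∈ avail opp (insert f (insert e own)) := by
      simp only [mem_avail, Finset.mem_insert, not_or] at hg ⊢
      exact ⟨hg.1, hg.2.1, hg.2.2.1, hge, hg.2.2.2⟩
    exact ih g hg' hgsafe
      (he.mono (Finset.insert_subset_insert _ (Finset.subset_insert _ _)))
      (Finset.insert_comm _ _ _)

end Strategy

section Relabel

variable {n : ℕ}

/-- The image of an edge set under a permutation of the vertices. Relabelling both edge sets
expresses that two positions of the game are isomorphic. -/
def relabel (p : Equiv.Perm (Fin n)) (S : Finset (Sym2 (Fin n))) : Finset (Sym2 (Fin n)) :=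
  S.map p.toEmbedding.sym2Map

variable {own opp : Finset (Sym2 (Fin n))} (p : Equiv.Perm (Fin n)) (S : Finset (Sym2 (Fin n)))
  (e : Sym2 (Fin n))

theorem map_mem_relabel : e.map p ∈ relabel p S ↔ e ∈ S :=
  Finset.mem_map' p.toEmbedding.sym2Map

theorem relabel_insert : relabel p (insert e S) = insert (e.map p) (relabel p S) :=
  Finset.map_insert p.toEmbedding.sym2Map e S

theorem hasTriangle_relabel : HasTriangle (relabel p S) ↔ HasTriangle S := by
  have hmem (a b : Fin n) : s(p a, p b) ∈ relabel p S ↔ s(a, b) ∈ S := map_mem_relabel p S s(a, b)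
  refine (p.exists_congr fun a => p.exists_congr fun b => p.exists_congr fun c => ?_).symm
  simp only [hmem, p.injective.ne_iff]

theorem exists_map_perm_eq : ∃ e', Sym2.map p e' = e :=
  ⟨e.map p.symm, by simp [Sym2.map_map]⟩

theorem avail_relabel : avail (relabel p own) (relabel p opp) = relabel p (avail own opp) := by
  ext e
  obtain ⟨e, rfl⟩ := exists_map_perm_eq p e
  simp only [mem_avail, map_mem_relabel, Sym2.isDiag_map p.injective]

theorem moverWins_relabel (h : MoverWins own opp) :
    MoverWins (relabel p own) (relabel p opp) := by
  induction h with
  | step own opp e he hsafe hne _ ih =>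
    refine .step _ _ (e.map p) ?_ ?_ ?_ fun f hf hfsafe => ?_
    · rwa [avail_relabel, map_mem_relabel]
    · rwa [← relabel_insert, hasTriangle_relabel]
    · rw [← relabel_insert, avail_relabel]
      exact hne.map
    · obtain ⟨f, rfl⟩ := exists_map_perm_eq p f
      simp only [← relabel_insert, avail_relabel, map_mem_relabel, hasTriangle_relabel]
        at hf hfsafe ⊢
      exact ih f hf hfsafe

theorem nonMoverWins_relabel (h : NonMoverWins own opp) :
    NonMoverWins (relabel p own) (relabel p opp) := by
  refine ⟨avail_relabel p ▸ h.1.map, fun e he hsafe => ?_⟩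
  obtain ⟨e, rfl⟩ := exists_map_perm_eq p e
  simp only [← relabel_insert, avail_relabel, map_mem_relabel, hasTriangle_relabel]
    at he hsafe ⊢
  exact moverWins_relabel p (h.2 e he hsafe)

end Relabel

theorem MoverWins.of_strategy_stealing {n : ℕ} {own opp : Finset (Sym2 (Fin n))}
    {e f : Sym2 (Fin n)} (p : Equiv.Perm (Fin n)) (hn : 6 ≤ n)
    (hopp : ¬ HasTriangle opp) (he : HasTriangle (insert e opp)) (hf : f ∈ avail own opp)
    (hown_swap : relabel p (insert e own) = opp)
    (hopp_swap : relabel p opp = insert f own) : MoverWins own opp := by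
  have hsafe : ¬ HasTriangle (insert e own) := by rwa [← hasTriangle_relabel p, hown_swap]
  rcases moverWins_or_nonMoverWins hn hsafe hopp with h | h
  · exact h.of_insert he
  · refine .of_nonMoverWins hf (by rwa [← hopp_swap, hasTriangle_relabel]) ?_
    simpa only [hown_swap, hopp_swap] using nonMoverWins_relabel p h

section Circulant

variable {n : ℕ} {I : Type*} [Fintype I] [AddCommGroup I] {v : I → Fin n} {d : I}

/-- The circulant graph with step `d` drawn on the vertices `v`: its edges join `v j` to
`v (j + d)`. The two colors of a drawn `K₅` are the circulants with steps `1` and `2`. -/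
def circulant (v : I → Fin n) (d : I) : Finset (Sym2 (Fin n)) :=
  Finset.univ.image fun j => s(v j, v (j + d))

theorem mem_circulant {x y : Fin n} :
    s(x, y) ∈ circulant v d ↔ ∃ a b, v a = x ∧ v b = y ∧ (b = a + d ∨ a = b + d) := by
  simp only [circulant, Finset.mem_image, Finset.mem_univ, true_and, Sym2.eq_iff]
  grind

theorem mk_notMem_circulant {w : Fin n} (hw : ∀ j, w ≠ v j) (x : Fin n) :
    s(x, w) ∉ circulant v d := by
  rw [mem_circulant]
  rintro ⟨-, b, -, hb, -⟩
  exact hw b hb.symm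

theorem circulant_neg (v : I → Fin n) (d : I) : circulant v (-d) = circulant v d := by
  ext ⟨x, y⟩
  simp only [mem_circulant, ← sub_eq_add_neg, eq_sub_iff_add_eq]
  grind

theorem circulant_comp_perm (v : I → Fin n) (σ : Equiv.Perm I) {d d' : I}
    (hσ : ∀ j, σ (j + d) = σ j + d') : circulant (v ∘ σ) d = circulant v d' := by
  ext e
  simp only [circulant, Function.comp_apply, hσ, Finset.mem_image, Finset.mem_univ, true_and]
  exact σ.exists_congr_right (q := fun j => s(v j, v (j + d')) = e)

theorem relabel_circulant (p : Equiv.Perm (Fin n)) (v : I → Fin n) (d : I) :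
    relabel p (circulant v d) = circulant (p ∘ v) d := by
  simp only [relabel, circulant, Finset.map_eq_image, Finset.image_image]
  rfl

theorem not_hasTriangle_circulant (hv : v.Injective) (hd : 3 • d ≠ 0) :
    ¬ HasTriangle (circulant v d) := by
  -- The steps around the triangle are `±d` and sum to zero, but `±d ± d ± d` is `±d` or `±3d`.
  rintro ⟨x, y, z, hxy, hxz, hyz, h₁, h₂, h₃⟩
  obtain ⟨a, b, rfl, rfl, hab⟩ := mem_circulant.1 h₁
  obtain ⟨a', c, ha', rfl, hac⟩ := mem_circulant.1 h₂
  obtain ⟨b', c', hb', hc', hbc⟩ := mem_circulant.1 h₃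
  obtain rfl := hv ha'
  obtain rfl := hv hb'
  obtain rfl := hv hc'
  grind

end Circulant

section DrawnK5

/-- The reflected doubling `j ↦ i - 2 (j - (i + 1))` of `ℤ/5`, which exchanges the pentagon and
the pentagram. Division by `2` is multiplication by `3`. -/
def pentagramSwap (i : Fin 5) : Equiv.Perm (Fin 5) where
  toFun j := i - 2 * (j - (i + 1))
  invFun j := 3 * (i - j) + (i + 1)
  left_inv := by decide +revert
  right_inv := by decide +revert

theorem pentagramSwap_add (i j d : Fin 5) :
    pentagramSwap i (j + d) = pentagramSwap i j + -(2 * d) := by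
  decide +revert

theorem pentagramSwap_self (i : Fin 5) : pentagramSwap i i = i + 2 := by
  decide +revert

theorem pentagramSwap_add_one (i : Fin 5) : pentagramSwap i (i + 1) = i := by
  decide +revert

variable {n : ℕ} {v : Fin 5 → Fin n} {w : Fin n} {p : Equiv.Perm (Fin n)} {i : Fin 5}

theorem greenK5_eq_circulant (v : Fin 5 → Fin n) : greenK5 v = circulant v 1 := rfl

theorem redK5_eq_circulant (v : Fin 5 → Fin n) : redK5 v = circulant v 2 := rfl

theorem circulant_comp_pentagramSwap (v : Fin 5 → Fin n) (i d : Fin 5) :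
    circulant (v ∘ pentagramSwap i) d = circulant v (2 * d) := by
  rw [circulant_comp_perm v _ fun j => pentagramSwap_add i j d, circulant_neg]

theorem relabel_greenK5_eq_redK5 (hp : p ∘ v = v ∘ pentagramSwap i) :
    relabel p (greenK5 v) = redK5 v := by
  rw [greenK5_eq_circulant, relabel_circulant, hp, circulant_comp_pentagramSwap,
    redK5_eq_circulant, mul_one]

theorem relabel_redK5_eq_greenK5 (hp : p ∘ v = v ∘ pentagramSwap i) :
    relabel p (redK5 v) = greenK5 v := by
  rw [redK5_eq_circulant, relabel_circulant, hp, circulant_comp_pentagramSwap,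
    greenK5_eq_circulant, show (2 * 2 : Fin 5) = -1 from rfl, circulant_neg]

theorem not_hasTriangle_insert_greenK5 (hv : v.Injective) (hw : ∀ j, w ≠ v j) (i : Fin 5) :
    ¬ HasTriangle (insert s(v i, w) (greenK5 v)) := fun h =>
  not_hasTriangle_circulant hv (by decide) (h.of_insert_pendant (mk_notMem_circulant hw))

theorem hasTriangle_insert_insert_greenK5 (hv : v.Injective) (hw : ∀ j, w ≠ v j) (i : Fin 5) :
    HasTriangle (insert s(v (i + 1), w) (insert s(v i, w) (greenK5 v))) := by
  have hmem : s(v i, v (i + 1)) ∈ greenK5 v := Finset.mem_image_of_mem _ (Finset.mem_univ i)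
  exact ⟨v i, v (i + 1), w, hv.ne (by simp), (hw _).symm, (hw _).symm, by simp [hmem], by simp,
    by simp⟩

theorem mk_mem_avail_redK5 (hv : v.Injective) (hw : ∀ j, w ≠ v j) {k : Fin 5} (hk : k ≠ i) :
    s(v k, w) ∈ avail (redK5 v) (insert s(v i, w) (greenK5 v)) := by
  have hgreen : s(v k, w) ∉ greenK5 v := mk_notMem_circulant hw _
  refine mem_avail.2 ⟨by simpa using (hw k).symm, mk_notMem_circulant hw _, ?_⟩
  simp [hv.ne hk, hgreen, hw]

end DrawnK5

/-- **Proposition (i).** For `n ≥ 6`, the position consisting of a drawn `K₅`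
on five of the vertices together with one extra green edge joining a vertex
`v i` of the drawn `K₅` to a vertex `w` outside it, with PII (red) to move,
is a win for PII. -/
theorem drawn_K5_plus_outside_green_edge_secondPlayerWin (n : ℕ) (hn : 6 ≤ n)
    (v : Fin 5 → Fin n) (hv : Function.Injective v)
    (w : Fin n) (hw : ∀ i, w ≠ v i) (i : Fin 5) :
    MoverWins (redK5 v) (insert s(v i, w) (greenK5 v)) := by
  let p : Equiv.Perm (Fin n) := (pentagramSwap i).viaEmbedding ⟨v, hv⟩
  have hpv (j : Fin 5) : p (v j) = v (pentagramSwap i j) :=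
    (pentagramSwap i).viaEmbedding_apply ⟨v, hv⟩ j
  have hpw : p w = w :=
    (pentagramSwap i).viaEmbedding_apply_of_notMem ⟨v, hv⟩ w fun ⟨j, hj⟩ => hw j hj.symm
  have hp_add_one : Sym2.map p s(v (i + 1), w) = s(v i, w) := by
    rw [Sym2.map_mk, hpv, hpw, pentagramSwap_add_one]
  have hp_self : Sym2.map p s(v i, w) = s(v (i + 2), w) := by
    rw [Sym2.map_mk, hpv, hpw, pentagramSwap_self]
  refine .of_strategy_stealing p hn (not_hasTriangle_insert_greenK5 hv hw i)
    (hasTriangle_insert_insert_greenK5 hv hw i)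
    (mk_mem_avail_redK5 hv hw (k := i + 2) (by simp)) ?_ ?_
  · rw [relabel_insert, hp_add_one, relabel_redK5_eq_greenK5 (funext hpv)]
  · rw [relabel_insert, hp_self, relabel_greenK5_eq_redK5 (funext hpv)]
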